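/- (Trapping region, steady case.) Let g > 0 and let ζ: ℝ² → ℝ be a smooth time-independent surface elevation. Let (x(t), y(t)) be a C² solution of the steady John–Sclavounos equations with initial position x₀ = (x(0), y(0)) and initial velocity u₀ = (ẋ(0), ẏ(0)). Define D₀ = { x ∈ ℝ² : ζ(x) ≤ ζ(x₀) + |u₀|²/(2g) + (u₀·∇ζ(x₀))²/(2g) }. Then (x(t), y(t)) ∈ D₀ for all t in the interval of existence of the solution. -/

import Mathlib

noncomputable section

/-- Partial derivative of `ζ(x,y)` with respect to `x`. -/
def dx (ζ : ℝ × ℝ → ℝ) (p : ℝ × ℝ) : ℝ := fderiv ℝ ζ p (1, 0)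

/-- Partial derivative of `ζ(x,y)` with respect to `y`. -/
def dy (ζ : ℝ × ℝ → ℝ) (p : ℝ × ℝ) : ℝ := fderiv ℝ ζ p (0, 1)

def dxx (ζ : ℝ × ℝ → ℝ) (p : ℝ × ℝ) : ℝ := fderiv ℝ (dx ζ) p (1, 0)
def dxy (ζ : ℝ × ℝ → ℝ) (p : ℝ × ℝ) : ℝ := fderiv ℝ (dx ζ) p (0, 1)
def dyy (ζ : ℝ × ℝ → ℝ) (p : ℝ × ℝ) : ℝ := fderiv ℝ (dy ζ) p (0, 1)

/-- The steady John–Sclavounos equations for a horizontal trajectory `(x(t), y(t))` on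
the time-independent surface `z = ζ(x,y)`, at time `t`, with gravity `g`:
`(1+ζ_x²)ẍ + ζ_xζ_y ÿ + Q ζ_x = 0` and `(1+ζ_y²)ÿ + ζ_xζ_y ẍ + Q ζ_y = 0`, where
`Q = ζ_xx ẋ² + 2ζ_xy ẋẏ + ζ_yy ẏ² + g`. -/
def SteadyJSEq (g : ℝ) (ζ : ℝ × ℝ → ℝ) (x y : ℝ → ℝ) (t : ℝ) : Prop :=
  (1 + dx ζ (x t, y t) ^ 2) * deriv (deriv x) t
      + dx ζ (x t, y t) * dy ζ (x t, y t) * deriv (deriv y) t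
      + (dxx ζ (x t, y t) * (deriv x t) ^ 2
          + 2 * dxy ζ (x t, y t) * deriv x t * deriv y t
          + dyy ζ (x t, y t) * (deriv y t) ^ 2 + g) * dx ζ (x t, y t) = 0
  ∧ (1 + dy ζ (x t, y t) ^ 2) * deriv (deriv y) t
      + dx ζ (x t, y t) * dy ζ (x t, y t) * deriv (deriv x) t
      + (dxx ζ (x t, y t) * (deriv x t) ^ 2
          + 2 * dxy ζ (x t, y t) * deriv x t * deriv y t
          + dyy ζ (x t, y t) * (deriv y t) ^ 2 + g) * dy ζ (x t, y t) = 0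

/-- Chain rule along a planar trajectory. -/
lemma hasDerivAt_comp_trajectory {f : ℝ × ℝ → ℝ} {x y : ℝ → ℝ} {t x' y' : ℝ}
    (hf : DifferentiableAt ℝ f (x t, y t)) (hx : HasDerivAt x x' t) (hy : HasDerivAt y y' t) :
    HasDerivAt (fun s => f (x s, y s))
      (x' * fderiv ℝ f (x t, y t) (1, 0) + y' * fderiv ℝ f (x t, y t) (0, 1)) t := by
  have h := hf.hasFDerivAt.comp_hasDerivAt t (hx.prodMk hy)
  have hv : ((x', y') : ℝ × ℝ) = x' • (1, 0) + y' • (0, 1) := by simp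
  rw [hv, map_add, map_smul, map_smul] at h
  exact h

lemma differentiable_fderiv_apply {ζ : ℝ × ℝ → ℝ} (hζ : ContDiff ℝ 2 ζ) (v : ℝ × ℝ) :
    Differentiable ℝ fun p => fderiv ℝ ζ p v :=
  ((hζ.fderiv_right (m := 1) (by norm_num)).differentiable (by norm_num)).clm_apply
    (differentiable_const v)

/-- Equality of the mixed partial derivatives. -/
lemma fderiv_dy_eq_dxy {ζ : ℝ × ℝ → ℝ} (hζ : ContDiff ℝ 2 ζ) (p : ℝ × ℝ) :
    fderiv ℝ (dy ζ) p (1, 0) = dxy ζ p := by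
  have hd : DifferentiableAt ℝ (fderiv ℝ ζ) p :=
    (hζ.fderiv_right (m := 1) (by norm_num)).differentiable (by norm_num) p
  have hs : IsSymmSndFDerivAt ℝ ζ p := hζ.contDiffAt.isSymmSndFDerivAt (by simp)
  have key (v w : ℝ × ℝ) :
      fderiv ℝ (fun q => fderiv ℝ ζ q v) p w = fderiv ℝ (fderiv ℝ ζ) p w v := by
    rw [fderiv_clm_apply hd (differentiableAt_const v)]
    simp
  exact (key (0, 1) (1, 0)).trans ((hs.eq _ _).trans (key (1, 0) (0, 1)).symm)

/-- The Hamiltonian `g ζ + |u|²/2 + (u·∇ζ)²/2` along a trajectory. -/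
def steadyJSHamiltonian (g : ℝ) (ζ : ℝ × ℝ → ℝ) (x y : ℝ → ℝ) (t : ℝ) : ℝ :=
  g * ζ (x t, y t) + (deriv x t ^ 2 + deriv y t ^ 2) / 2
    + (deriv x t * dx ζ (x t, y t) + deriv y t * dy ζ (x t, y t)) ^ 2 / 2

/-- The Hamiltonian is stationary wherever the steady John–Sclavounos equations hold. -/
lemma SteadyJSEq.hasDerivAt_hamiltonian {g : ℝ} {ζ : ℝ × ℝ → ℝ} (hζ : ContDiff ℝ 2 ζ)
    {x y : ℝ → ℝ} (hx : ContDiff ℝ 2 x) (hy : ContDiff ℝ 2 y) {t : ℝ}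
    (h : SteadyJSEq g ζ x y t) : HasDerivAt (steadyJSHamiltonian g ζ x y) 0 t := by
  have hasDeriv {z : ℝ → ℝ} (hz : ContDiff ℝ 2 z) : HasDerivAt z (deriv z t) t :=
    (hz.differentiable (by norm_num) t).hasDerivAt
  have hasDeriv₂ {z : ℝ → ℝ} (hz : ContDiff ℝ 2 z) :
      HasDerivAt (deriv z) (deriv (deriv z) t) t :=
    ((ContDiff.deriv' (n := 1) hz).differentiable (by norm_num) t).hasDerivAt
  have hζt : HasDerivAt (fun s => ζ (x s, y s))
      (deriv x t * dx ζ (x t, y t) + deriv y t * dy ζ (x t, y t)) t :=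
    hasDerivAt_comp_trajectory (hζ.differentiable (by norm_num) _)
      (hasDeriv hx) (hasDeriv hy)
  have hdx : HasDerivAt (fun s => dx ζ (x s, y s))
      (deriv x t * dxx ζ (x t, y t) + deriv y t * dxy ζ (x t, y t)) t :=
    hasDerivAt_comp_trajectory (f := dx ζ) (differentiable_fderiv_apply hζ (1, 0) _)
      (hasDeriv hx) (hasDeriv hy)
  have hdy : HasDerivAt (fun s => dy ζ (x s, y s))
      (deriv x t * dxy ζ (x t, y t) + deriv y t * dyy ζ (x t, y t)) t := by
    rw [← fderiv_dy_eq_dxy hζ]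
    exact hasDerivAt_comp_trajectory (f := dy ζ) (differentiable_fderiv_apply hζ (0, 1) _)
      (hasDeriv hx) (hasDeriv hy)
  have hH := ((hζt.const_mul g).add
    ((((hasDeriv₂ hx).pow 2).add ((hasDeriv₂ hy).pow 2)).div_const 2)).add
    (((((hasDeriv₂ hx).mul hdx).add ((hasDeriv₂ hy).mul hdy)).pow 2).div_const 2)
  refine hH.congr_deriv ?_
  obtain ⟨h₁, h₂⟩ := h
  simp only [Pi.add_apply, Pi.mul_apply]
  push_cast
  linear_combination deriv x t * h₁ + deriv y t * h₂

/-- The Hamiltonian is conserved along solutions. -/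
lemma steadyJSHamiltonian_eq {g : ℝ} {ζ : ℝ × ℝ → ℝ} (hζ : ContDiff ℝ 2 ζ)
    {x y : ℝ → ℝ} (hx : ContDiff ℝ 2 x) (hy : ContDiff ℝ 2 y) {J : Set ℝ}
    (hJ : J.OrdConnected) (hJS : ∀ t ∈ J, SteadyJSEq g ζ x y t) {s t : ℝ}
    (hs : s ∈ J) (ht : t ∈ J) :
    steadyJSHamiltonian g ζ x y t = steadyJSHamiltonian g ζ x y s := by
  have h := hJ.convex.norm_image_sub_le_of_norm_hasDerivWithin_le (C := 0)
    (fun r hr => ((hJS r hr).hasDerivAt_hamiltonian hζ hx hy).hasDerivWithinAt)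
    (fun _ _ => by simp) hs ht
  rw [zero_mul] at h
  exact sub_eq_zero.mp (norm_le_zero_iff.mp h)

/-- (Trapping region, steady case.) A particle obeying the steady
John–Sclavounos equations with initial position `x₀ = (x(0), y(0))` and initial
velocity `u₀ = (ẋ(0), ẏ(0))` remains for all time in the set
`D₀ = { x : ζ(x) ≤ ζ(x₀) + |u₀|²/(2g) + (u₀·∇ζ(x₀))²/(2g) }`. -/
theorem steadyJS_trapping_region
    (g : ℝ) (hg : 0 < g) (ζ : ℝ × ℝ → ℝ) (hζ : ContDiff ℝ 2 ζ)
    (x y : ℝ → ℝ) (hx : ContDiff ℝ 2 x) (hy : ContDiff ℝ 2 y)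
    (J : Set ℝ) (hJ : J.OrdConnected) (h0 : (0 : ℝ) ∈ J)
    (hJS : ∀ t ∈ J, SteadyJSEq g ζ x y t)
    (D₀ : Set (ℝ × ℝ))
    (hD₀ : D₀ = {q : ℝ × ℝ | ζ q ≤ ζ (x 0, y 0)
      + ((deriv x 0) ^ 2 + (deriv y 0) ^ 2) / (2 * g)
      + (deriv x 0 * dx ζ (x 0, y 0) + deriv y 0 * dy ζ (x 0, y 0)) ^ 2 / (2 * g)}) :
    ∀ t ∈ J, (x t, y t) ∈ D₀ := by
  intro t ht
  have h := steadyJSHamiltonian_eq hζ hx hy hJ hJS h0 ht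
  unfold steadyJSHamiltonian at h
  rw [hD₀, Set.mem_ofPred_eq, add_assoc, ← add_div, ← sub_le_iff_le_add',
    le_div_iff₀ (by positivity)]
  nlinarith [sq_nonneg (deriv x t), sq_nonneg (deriv y t),
    sq_nonneg (deriv x t * dx ζ (x t, y t) + deriv y t * dy ζ (x t, y t))]

end
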